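/- Let A be a finite nonempty set, ℓ ≥ 1, and θ_0, …, θ_{ℓ−1} : A → A the column maps of a length-ℓ substitution θ; let S_θ be the subsemigroup of functions A → A generated by {θ_0, …, θ_{ℓ−1}}. Suppose θ is primitive: there exists k ≥ 1 such that for all a, a' ∈ A there are indices i_1, …, i_k ∈ {0,…,ℓ−1} with (θ_{i_1} ∘ ⋯ ∘ θ_{i_k})(a) = a'. Then θ is essentially surjective: every a ∈ A lies in the range of some element of S_θ of minimal rank. -/

import Mathlib

/-! The minimal-rank elements of `S_θ` form a left ideal: composing a minimal-rank `f` with any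
`h ∈ S_θ` on the left cannot raise the rank. Given a letter `a`, pick `f` of minimal rank and any
letter `f x` in its range; primitivity supplies `h ∈ S_θ` with `h (f x) = a`, so `h ∘ f` has
minimal rank and `a` in its range. -/

/-- The semigroup S_θ of a length-ℓ substitution with column maps
θ 0, …, θ (ℓ-1): the set of all (nonempty) compositions of column maps. -/
def substSemigroup {A : Type*} {ℓ : ℕ} (θ : Fin ℓ → A → A) : Set (A → A) :=
  {f | ∃ l : List (Fin ℓ), l ≠ [] ∧ (l.map θ).foldr (· ∘ ·) id = f}

theorem foldr_comp_append {A : Type*} (l m : List (A → A)) :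
    (l ++ m).foldr (· ∘ ·) id = l.foldr (· ∘ ·) id ∘ m.foldr (· ∘ ·) id := by
  induction l with
  | nil => rfl
  | cons g l ih => simp only [List.cons_append, List.foldr_cons, ih, Function.comp_assoc]

theorem substSemigroup_comp_mem {A : Type*} {ℓ : ℕ} {θ : Fin ℓ → A → A} {f g : A → A}
    (hf : f ∈ substSemigroup θ) (hg : g ∈ substSemigroup θ) : f ∘ g ∈ substSemigroup θ := by
  obtain ⟨l, hl, rfl⟩ := hf
  obtain ⟨m, -, rfl⟩ := hg
  exact ⟨l ++ m, by simp [hl], by rw [List.map_append, foldr_comp_append]⟩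

/-- Let θ be a length-ℓ substitution on a finite nonempty
alphabet A. If θ is primitive (some k ≥ 1 such that every letter a' is
obtained from every letter a by some composition of k column maps), then θ is
essentially surjective: every a ∈ A lies in the range of some minimal-rank
element of S_θ. -/
theorem primitive_implies_essentially_surjective
    {A : Type*} [Finite A] [Nonempty A] {ℓ : ℕ} (hℓ : 1 ≤ ℓ)
    (θ : Fin ℓ → A → A)
    (hprim : ∃ k : ℕ, 1 ≤ k ∧ ∀ a a' : A, ∃ l : List (Fin ℓ),
      l.length = k ∧ ((l.map θ).foldr (· ∘ ·) id) a = a') :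
    ∀ a : A, ∃ f ∈ substSemigroup θ,
      (∀ g ∈ substSemigroup θ, (Set.range f).ncard ≤ (Set.range g).ncard) ∧
      a ∈ Set.range f := by
  obtain ⟨k, hk, hprim⟩ := hprim
  intro a
  have hne : (substSemigroup θ).Nonempty := ⟨_, [⟨0, hℓ⟩], by simp, rfl⟩
  obtain ⟨f, hf, hmin⟩ :=
    exists_minimalFor_of_wellFoundedLT (· ∈ substSemigroup θ)
      (fun f : A → A => (Set.range f).ncard) hne
  obtain ⟨x⟩ := ‹Nonempty A›
  obtain ⟨l, hlen, hl⟩ := hprim (f x) a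
  have hh : (l.map θ).foldr (· ∘ ·) id ∈ substSemigroup θ :=
    ⟨l, List.ne_nil_of_length_pos (by omega), rfl⟩
  refine ⟨_, substSemigroup_comp_mem hh hf, fun g hg => ?_, x, hl⟩
  calc _ ≤ (Set.range f).ncard := by
        rw [Set.range_comp]
        exact Set.ncard_image_le (Set.toFinite _)
    _ ≤ _ := (le_total _ _).elim id (hmin hg)
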